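/- Let H > 0 and t ∈ (0, 1/(4H)), and let h_t be the radially symmetric solution of (CMC) on the annulus {r₁(t) < √(x²+y²) < r₂(t)} given by h_t(x,y) = f(√(x²+y²)) with f(r) = ∫_{1/(2H)}^{r} g(ρ)/√(1 − g(ρ)²) dρ, g(ρ) = Hρ + t/ρ, r₁(t) = (1 − √(1 − 4tH))/(2H), r₂(t) = (1 + √(1 − 4tH))/(2H). Let θ₁ < θ₂ and let C be the arc of the circle of radius 1/(2H) centered at the origin parametrized counterclockwise by c(θ) = (cos θ/(2H), sin θ/(2H)), θ ∈ [θ₁, θ₂] (this circle lies inside the annulus since r₁(t) < 1/(2H) < r₂(t)). Then ∫_C ω_{h_t} = (1/2 + 2Ht) · ℓ(C), i.e. ∫_{θ₁}^{θ₂} (∂_x h_t(c(θ)) c₂'(θ) − ∂_y h_t(c(θ)) c₁'(θ))/W_{h_t}(c(θ)) dθ = (1/2 + 2Ht)(θ₂ − θ₁)/(2H), where ℓ(C) = (θ₂ − θ₁)/(2H) is the length of C. In particular ∫_C ω_{h_t} → ℓ(C) as t → 1/(4H). -/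

import Mathlib

/-!
On the circle of radius `r₀ = 1/(2H)` everything is explicit. Write `G = g(r₀) = 1/2 + 2Ht`, which
lies in `(0, 1)` for `0 < t < 1/(4H)`. By the fundamental theorem of calculus
`f'(r₀) = G / √(1 - G²)` (`hasDerivAt_ffun`), so by the chain rule the gradient of `h_t` at
`c(θ)` is `f'(r₀) (cos θ, sin θ)` (`hasFDerivAt_hfun`) and `W = √(1 + f'(r₀)²) = 1 / √(1 - G²)`.
Hence the integrand is the constant `G / (2H)` (`integrand_eq`), which gives the formula; the limit
holds because `1/2 + 2Ht → 1` as `t → 1/(4H)`.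
-/

open Real MeasureTheory Filter Set

noncomputable section

/-- Euclidean norm on `ℝ × ℝ`. -/
def enorm2 (p : ℝ × ℝ) : ℝ := Real.sqrt (p.1 ^ 2 + p.2 ^ 2)

/-- Partial derivative in the `x` direction. -/
def pdx (u : ℝ × ℝ → ℝ) (p : ℝ × ℝ) : ℝ := fderiv ℝ u p (1, 0)

/-- Partial derivative in the `y` direction. -/
def pdy (u : ℝ × ℝ → ℝ) (p : ℝ × ℝ) : ℝ := fderiv ℝ u p (0, 1)

/-- The area element `W_u = √(1 + |∇u|²)`. -/
def Wgraph (u : ℝ × ℝ → ℝ) (p : ℝ × ℝ) : ℝ :=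
  Real.sqrt (1 + (pdx u p) ^ 2 + (pdy u p) ^ 2)

/-- Upward unit normal of the graph of `u`. -/
def normalVec (u : ℝ × ℝ → ℝ) (p : ℝ × ℝ) : ℝ × ℝ × ℝ :=
  (-pdx u p / Wgraph u p, -pdy u p / Wgraph u p, 1 / Wgraph u p)

/-- `u` is a (C²) solution of the constant mean curvature `H` equation on `Ω`. -/
def IsCMCSolution (H : ℝ) (Ω : Set (ℝ × ℝ)) (u : ℝ × ℝ → ℝ) : Prop :=
  ContDiffOn ℝ 2 u Ω ∧ ∀ p ∈ Ω,
    (1 + (pdy u p) ^ 2) * pdx (fun q => pdx u q) p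
      - 2 * (pdx u p) * (pdy u p) * pdy (fun q => pdx u q) p
      + (1 + (pdx u p) ^ 2) * pdy (fun q => pdy u q) p
    = 2 * H * (1 + (pdx u p) ^ 2 + (pdy u p) ^ 2) ^ ((3 : ℝ) / 2)

/-- `C` is a divergence line of the sequence `u` on `Ω`. -/
def IsDivergenceLine (H : ℝ) (Ω : Set (ℝ × ℝ)) (u : ℕ → ℝ × ℝ → ℝ)
    (C : Set (ℝ × ℝ)) : Prop :=
  ∃ z₁ : ℝ × ℝ, C ⊆ Ω ∧ (∀ q ∈ C, enorm2 (q - z₁) = 1 / (2 * H)) ∧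
    IsConnected C ∧ C.Nontrivial ∧
    ∃ φ : ℕ → ℕ, StrictMono φ ∧ ∀ Q ∈ C,
      Tendsto (fun n => normalVec (u (φ n)) Q) atTop
        (nhds (2 * H * (z₁.1 - Q.1), 2 * H * (z₁.2 - Q.2), 0))

/-- `g(ρ) = Hρ + t/ρ`. -/
def gfun (H t ρ : ℝ) : ℝ := H * ρ + t / ρ

/-- The radial profile `f(r) = ∫_{1/(2H)}^r g(ρ)/√(1-g(ρ)²) dρ`. -/
def ffun (H t r : ℝ) : ℝ :=
  ∫ ρ in (1 / (2 * H))..r, gfun H t ρ / Real.sqrt (1 - (gfun H t ρ) ^ 2)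

/-- The radially symmetric solution `h_t(x,y) = f(√(x²+y²))`. -/
def hfun (H t : ℝ) (p : ℝ × ℝ) : ℝ := ffun H t (enorm2 p)

lemma gfun_radius (H t : ℝ) (hH : 0 < H) : gfun H t (1 / (2 * H)) = 1 / 2 + 2 * H * t := by
  unfold gfun
  field_simp

/-- For `0 < t < 1/(4H)` the value `G = g(1/(2H))` satisfies `G² < 1`, so the integrand defining
`f` is regular at `1/(2H)`. -/
lemma one_sub_sq_pos (H t : ℝ) (hH : 0 < H) (ht : t ∈ Set.Ioo 0 (1 / (4 * H))) :
    0 < 1 - (1 / 2 + 2 * H * t) ^ 2 := by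
  have h1 : 0 < H * t := mul_pos hH ht.1
  have h2 : t * (4 * H) < 1 := (lt_div_iff₀ (by positivity)).1 ht.2
  nlinarith

lemma hasDerivAt_ffun (H t : ℝ) (hH : 0 < H) (ht : t ∈ Set.Ioo 0 (1 / (4 * H))) :
    HasDerivAt (ffun H t)
      ((1 / 2 + 2 * H * t) / Real.sqrt (1 - (1 / 2 + 2 * H * t) ^ 2)) (1 / (2 * H)) := by
  have hr : (1 / (2 * H)) ≠ 0 := by positivity
  have hg : ContinuousAt (gfun H t) (1 / (2 * H)) := by
    unfold gfun
    fun_prop (disch := assumption)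
  have hm : Measurable (fun ρ => gfun H t ρ / Real.sqrt (1 - (gfun H t ρ) ^ 2)) := by
    unfold gfun
    fun_prop
  have hc : ContinuousAt (fun ρ => gfun H t ρ / Real.sqrt (1 - (gfun H t ρ) ^ 2))
      (1 / (2 * H)) := by
    refine hg.div (by fun_prop) ?_
    rw [gfun_radius H t hH]
    exact ne_of_gt (Real.sqrt_pos.2 (one_sub_sq_pos H t hH ht))
  -- The base point is the endpoint itself, so integrability holds trivially.
  have key := intervalIntegral.integral_hasDerivAt_right
    (IntervalIntegrable.refl (μ := volume) (a := 1 / (2 * H)))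
    (hm.stronglyMeasurable.stronglyMeasurableAtFilter) hc
  rw [gfun_radius H t hH] at key
  exact key

lemma circle_sq (H θ : ℝ) (hH : 0 < H) :
    (Real.cos θ / (2 * H)) ^ 2 + (Real.sin θ / (2 * H)) ^ 2 = (1 / (2 * H)) ^ 2 := by
  field_simp
  exact Real.cos_sq_add_sin_sq θ

lemma enorm2_circle (H θ : ℝ) (hH : 0 < H) :
    enorm2 (Real.cos θ / (2 * H), Real.sin θ / (2 * H)) = 1 / (2 * H) := by
  unfold enorm2
  rw [circle_sq H θ hH]
  exact Real.sqrt_sq (by positivity)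

lemma hasFDerivAt_enorm2 (H θ : ℝ) (hH : 0 < H) :
    HasFDerivAt enorm2
      (Real.cos θ • ContinuousLinearMap.fst ℝ ℝ ℝ + Real.sin θ • ContinuousLinearMap.snd ℝ ℝ ℝ)
      (Real.cos θ / (2 * H), Real.sin θ / (2 * H)) := by
  have h1 : HasFDerivAt (fun p : ℝ × ℝ => p.1 ^ 2 + p.2 ^ 2) _
      (Real.cos θ / (2 * H), Real.sin θ / (2 * H)) :=
    ((hasFDerivAt_fst (𝕜 := ℝ) (E := ℝ) (F := ℝ)).pow 2).add
      ((hasFDerivAt_snd (𝕜 := ℝ) (E := ℝ) (F := ℝ)).pow 2)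
  have h2 := h1.sqrt (by rw [circle_sq H θ hH]; positivity)
  refine h2.congr_fderiv ?_
  rw [circle_sq H θ hH, Real.sqrt_sq (by positivity)]
  ext <;> simp <;> field_simp

/-- Chain rule: `∇h_t = f'(1/(2H)) (cos θ, sin θ)` at `c(θ)`. -/
lemma hasFDerivAt_hfun (H t θ : ℝ) (hH : 0 < H) (ht : t ∈ Set.Ioo 0 (1 / (4 * H))) :
    HasFDerivAt (hfun H t)
      (((1 / 2 + 2 * H * t) / Real.sqrt (1 - (1 / 2 + 2 * H * t) ^ 2)) •
        (Real.cos θ • ContinuousLinearMap.fst ℝ ℝ ℝ +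
          Real.sin θ • ContinuousLinearMap.snd ℝ ℝ ℝ))
      (Real.cos θ / (2 * H), Real.sin θ / (2 * H)) := by
  have hf := hasDerivAt_ffun H t hH ht
  rw [← enorm2_circle H θ hH] at hf
  exact hf.comp_hasFDerivAt _ (hasFDerivAt_enorm2 H θ hH)

lemma integrand_eq (H t θ : ℝ) (hH : 0 < H) (ht : t ∈ Set.Ioo 0 (1 / (4 * H))) :
    (pdx (hfun H t) (Real.cos θ / (2 * H), Real.sin θ / (2 * H)) * (Real.cos θ / (2 * H))
      - pdy (hfun H t) (Real.cos θ / (2 * H), Real.sin θ / (2 * H))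
        * (-(Real.sin θ / (2 * H))))
      / Wgraph (hfun H t) (Real.cos θ / (2 * H), Real.sin θ / (2 * H))
    = (1 / 2 + 2 * H * t) / (2 * H) := by
  have hG := one_sub_sq_pos H t hH ht
  have hD := (hasFDerivAt_hfun H t θ hH ht).fderiv
  have hx : pdx (hfun H t) (Real.cos θ / (2 * H), Real.sin θ / (2 * H)) =
      (1 / 2 + 2 * H * t) / Real.sqrt (1 - (1 / 2 + 2 * H * t) ^ 2) * Real.cos θ := by
    simp [pdx, hD]
  have hy : pdy (hfun H t) (Real.cos θ / (2 * H), Real.sin θ / (2 * H)) =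
      (1 / 2 + 2 * H * t) / Real.sqrt (1 - (1 / 2 + 2 * H * t) ^ 2) * Real.sin θ := by
    simp [pdy, hD]
  unfold Wgraph
  rw [hx, hy]
  generalize 1 / 2 + 2 * H * t = G at hG ⊢
  have hs : 0 < Real.sqrt (1 - G ^ 2) := Real.sqrt_pos.2 hG
  have hsq : Real.sqrt (1 - G ^ 2) ^ 2 = 1 - G ^ 2 := Real.sq_sqrt hG.le
  generalize Real.sqrt (1 - G ^ 2) = s at hs hsq ⊢
  have hcs := Real.cos_sq_add_sin_sq θ
  have hW : 1 + (G / s * Real.cos θ) ^ 2 + (G / s * Real.sin θ) ^ 2 = (1 / s) ^ 2 := by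
    field_simp
    linear_combination hsq + G ^ 2 * hcs
  rw [hW, Real.sqrt_sq (by positivity)]
  field_simp
  linear_combination G * hcs

/-- on the arc `C` of the circle of radius `1/(2H)` centered at the origin
parametrized counterclockwise by `c(θ) = (cos θ/(2H), sin θ/(2H))`, `θ ∈ [θ₁, θ₂]`, one has
`∫_C ω_{h_t} = (1/2 + 2Ht) ℓ(C)`; in particular `∫_C ω_{h_t} → ℓ(C)` as `t → 1/(4H)⁻`. -/
theorem stmt_16 (H θ₁ θ₂ : ℝ) (hH : 0 < H) (hθ : θ₁ < θ₂) :
    (∀ t ∈ Set.Ioo 0 (1 / (4 * H)),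
      (∫ θ in θ₁..θ₂,
        (pdx (hfun H t) (Real.cos θ / (2 * H), Real.sin θ / (2 * H))
            * (Real.cos θ / (2 * H))
          - pdy (hfun H t) (Real.cos θ / (2 * H), Real.sin θ / (2 * H))
            * (-(Real.sin θ / (2 * H))))
          / Wgraph (hfun H t) (Real.cos θ / (2 * H), Real.sin θ / (2 * H)))
      = (1 / 2 + 2 * H * t) * ((θ₂ - θ₁) / (2 * H))) ∧
    Tendsto (fun t : ℝ =>
      ∫ θ in θ₁..θ₂,
        (pdx (hfun H t) (Real.cos θ / (2 * H), Real.sin θ / (2 * H))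
            * (Real.cos θ / (2 * H))
          - pdy (hfun H t) (Real.cos θ / (2 * H), Real.sin θ / (2 * H))
            * (-(Real.sin θ / (2 * H))))
          / Wgraph (hfun H t) (Real.cos θ / (2 * H), Real.sin θ / (2 * H)))
      (nhdsWithin (1 / (4 * H)) (Set.Iio (1 / (4 * H))))
      (nhds ((θ₂ - θ₁) / (2 * H))) := by
  have hmain : ∀ t ∈ Set.Ioo 0 (1 / (4 * H)),
      (∫ θ in θ₁..θ₂,
        (pdx (hfun H t) (Real.cos θ / (2 * H), Real.sin θ / (2 * H))
            * (Real.cos θ / (2 * H))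
          - pdy (hfun H t) (Real.cos θ / (2 * H), Real.sin θ / (2 * H))
            * (-(Real.sin θ / (2 * H))))
          / Wgraph (hfun H t) (Real.cos θ / (2 * H), Real.sin θ / (2 * H)))
      = (1 / 2 + 2 * H * t) * ((θ₂ - θ₁) / (2 * H)) := by
    intro t ht
    simp_rw [fun θ => integrand_eq H t θ hH ht]
    rw [intervalIntegral.integral_const, smul_eq_mul]
    ring
  refine ⟨hmain, ?_⟩
  have hlim : Tendsto (fun t : ℝ => (1 / 2 + 2 * H * t) * ((θ₂ - θ₁) / (2 * H)))
      (nhdsWithin (1 / (4 * H)) (Set.Iio (1 / (4 * H)))) (nhds ((θ₂ - θ₁) / (2 * H))) := by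
    have hc : Continuous (fun t : ℝ => (1 / 2 + 2 * H * t) * ((θ₂ - θ₁) / (2 * H))) := by
      fun_prop
    have h := (hc.tendsto (1 / (4 * H))).mono_left
      (nhdsWithin_le_nhds (s := Set.Iio (1 / (4 * H))))
    have hone : 1 / 2 + 2 * H * (1 / (4 * H)) = 1 := by
      field_simp
      norm_num
    rwa [hone, one_mul] at h
  -- The formula is available on `(0, 1/(4H))`, a left neighbourhood of `1/(4H)`.
  refine hlim.congr' ?_
  filter_upwards [Ioo_mem_nhdsLT (show (0 : ℝ) < 1 / (4 * H) by positivity)] with t ht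
  exact (hmain t ht).symm
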